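/- Let 1 ≤ p < ∞, r = ∞, 0 < q ≤ ∞, let u, v, w ∈ 𝔐⁺ be weights and let k(x,y) ≥ 0 be a Borel kernel on [0,∞)² with k(x,y) = 0 for x < y. Define (Sf)(x) := (∫ₓ^∞ w(y)(∫_y^∞ k(z,y)f(z)dz)^q dy)^{1/q} (with the outer integral replaced by an essential supremum analogously when q = ∞), set U(t) := ess sup_{0≤x≤t} u(x), and (H*_t f)(x) := χ_{[t,∞)}(x)∫ₓ^∞ k(z,x)f(z)dz. Then the least constant C_S such that ‖Sf‖_{L^∞_u} ≤ C_S‖f‖_{L^p_v} for all f ∈ 𝔐⁺ equals sup_{t≥0} U(t)‖H*_t‖_{L^p_v→L^q_w}. -/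

import Mathlib

open MeasureTheory Set ENNReal

noncomputable section

/-- `∫₀ᵃ f` (Lebesgue integral over `(0,a)`). -/
def intTo (a : ℝ) (f : ℝ → ℝ≥0∞) : ℝ≥0∞ := ∫⁻ t in Ioo (0:ℝ) a, f t

/-- `∫ₐ^∞ f`. -/
def intFrom (a : ℝ) (f : ℝ → ℝ≥0∞) : ℝ≥0∞ := ∫⁻ t in Ioi a, f t

/-- `∫_c^d f`. -/
def intIoo (c d : ℝ) (f : ℝ → ℝ≥0∞) : ℝ≥0∞ := ∫⁻ t in Ioo c d, f t

/-- `∫_c^d f` with a possibly infinite upper endpoint `d`. -/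
def intIooE (c : ℝ) (d : ℝ≥0∞) (f : ℝ → ℝ≥0∞) : ℝ≥0∞ :=
  ∫⁻ t in {z : ℝ | c < z ∧ ENNReal.ofReal z < d}, f t

/-- `∫_d^∞ f` with a possibly infinite lower endpoint `d`. -/
def intFromE (d : ℝ≥0∞) (f : ℝ → ℝ≥0∞) : ℝ≥0∞ :=
  ∫⁻ t in {z : ℝ | d < ENNReal.ofReal z}, f t

/-- Weighted `L^p` quasinorm on `(0,∞)`, for `0 < p < ∞`. -/
def lpN (p : ℝ) (v f : ℝ → ℝ≥0∞) : ℝ≥0∞ :=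
  (∫⁻ x in Ioi (0:ℝ), f x ^ p * v x) ^ (1/p)

/-- Weighted `L^∞` norm on `(0,∞)`. -/
def linfN (v f : ℝ → ℝ≥0∞) : ℝ≥0∞ :=
  essSup (fun x => v x * f x) (volume.restrict (Ioi (0:ℝ)))

/-- Weighted `L^p` (quasi)norm with exponent `p ∈ (0,∞]`. -/
def lgenN (p : ℝ≥0∞) (v f : ℝ → ℝ≥0∞) : ℝ≥0∞ :=
  if p = ∞ then linfN v f else lpN p.toReal v f

/-- Least constant `C` such that `Φ f ≤ C * Ψ f` for every measurable `f`. -/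
def leastC (Φ Ψ : (ℝ → ℝ≥0∞) → ℝ≥0∞) : ℝ≥0∞ :=
  sInf {C : ℝ≥0∞ | ∀ f : ℝ → ℝ≥0∞, Measurable f → Φ f ≤ C * Ψ f}

/-- Oinarov's condition with constant `D`. -/
def Oinarov (k : ℝ → ℝ → ℝ≥0∞) (D : ℝ≥0∞) : Prop :=
  (∀ x y : ℝ, x < y → k x y = 0) ∧
    ∀ x z y : ℝ, 0 ≤ y → y ≤ z → z ≤ x →
      D⁻¹ * (k x z + k z y) ≤ k x y ∧ k x y ≤ D * (k x z + k z y)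

/-- `σ(x) = inf {y > 0 : ∫₀ʸ u ≥ 2∫₀ˣ u}`, with `inf ∅ = ∞`. -/
def sigmaF (u : ℝ → ℝ≥0∞) (x : ℝ) : ℝ≥0∞ :=
  sInf (ENNReal.ofReal '' {y : ℝ | 0 < y ∧ 2 * intTo x u ≤ intTo y u})

/-- `σ⁻¹(x) = inf {y > 0 : ∫₀ʸ u ≥ ½∫₀ˣ u}`. -/
def sigmaInv (u : ℝ → ℝ≥0∞) (x : ℝ) : ℝ :=
  sInf {y : ℝ | 0 < y ∧ intTo x u / 2 ≤ intTo y u}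

/-- The extension of `σ` to a possibly infinite argument. -/
def sigmaE (u : ℝ → ℝ≥0∞) (d : ℝ≥0∞) : ℝ≥0∞ :=
  if d = ∞ then ∞ else sigmaF u d.toReal

/-- `σ² = σ ∘ σ`. -/
def sigma2 (u : ℝ → ℝ≥0∞) (x : ℝ) : ℝ≥0∞ := sigmaE u (sigmaF u x)

/-- `σ³ = σ ∘ σ ∘ σ`. -/
def sigma3 (u : ℝ → ℝ≥0∞) (x : ℝ) : ℝ≥0∞ := sigmaE u (sigma2 u x)

/-- `ζ(x) = sup {y > 0 : ∫_y^∞ u ≥ ½∫ₓ^∞ u}`, with `sup ∅ = 0`. -/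
def zt (u : ℝ → ℝ≥0∞) (x : ℝ) : ℝ :=
  sSup {y : ℝ | 0 < y ∧ intFrom x u / 2 ≤ intFrom y u}

/-- `ζ⁻¹(x) = sup {y > 0 : ∫_y^∞ u ≥ 2∫ₓ^∞ u}`, with `sup ∅ = 0`. -/
def ztInv (u : ℝ → ℝ≥0∞) (x : ℝ) : ℝ :=
  sSup {y : ℝ | 0 < y ∧ 2 * intFrom x u ≤ intFrom y u}

/-- The operator `S` with exponent `q ∈ (0,∞]`. -/
def opSg (q : ℝ≥0∞) (w : ℝ → ℝ≥0∞) (k : ℝ → ℝ → ℝ≥0∞) (f : ℝ → ℝ≥0∞) (x : ℝ) : ℝ≥0∞ :=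
  if q = ∞ then
    essSup (fun y => w y * intFrom y (fun z => k z y * f z)) (volume.restrict (Ici x))
  else
    (∫⁻ y in Ioi x, w y * (intFrom y (fun z => k z y * f z)) ^ q.toReal) ^ (1/q.toReal)

/-- `(H*_t f)(x) = χ_{[t,∞)}(x) ∫_x^∞ k(z,x) f(z) dz`. -/
def HsT (k : ℝ → ℝ → ℝ≥0∞) (t : ℝ) (f : ℝ → ℝ≥0∞) (x : ℝ) : ℝ≥0∞ :=
  if t ≤ x then intFrom x (fun z => k z x * f z) else 0

/-- `U(t) = ess sup_{0 ≤ x ≤ t} u(x)`. -/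
def Ubar (u : ℝ → ℝ≥0∞) (t : ℝ) : ℝ≥0∞ :=
  essSup u (volume.restrict (Icc (0:ℝ) t))

/-!
For fixed `f` the function `G := S f` is nonincreasing, so `ess sup u G` does not change when `u` is
replaced by its running essential supremum `U`: almost everywhere `u ≤ U`, and conversely
`G ≥ G(t)` on `[0, t]`. Hence `‖S f‖_{L^∞_u} = sup_t U(t) (S f)(t)`, and `(S f)(t)` is precisely the
`L^q_w` norm of `H*_t f`. Dividing by `‖f‖_{L^p_v}` and interchanging the suprema over `f` and `t`
gives the formula.

The bound `u ≤ U` a.e. reduces, through a countable dense set of levels `c`, to the sets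
`{U ≤ c < u}`: such a set has null intersection with `(-∞, x]` for each of its own points `x`, and
is therefore locally null.
-/

-- At the degenerate values, `a / 0 = ∞` for `a ≠ 0` records that no finite constant works, while
-- `0 / 0 = 0` and `a / ∞ = 0` record that `f` does not affect the infimum of admissible constants.
theorem leastC_eq_iSup_div (Φ Ψ : (ℝ → ℝ≥0∞) → ℝ≥0∞) :
    leastC Φ Ψ = ⨆ (f : ℝ → ℝ≥0∞) (_ : Measurable f), Φ f / Ψ f := by
  apply le_antisymm
  · refine le_of_forall_gt_imp_ge_of_dense fun C hC => ?_
    rcases eq_or_ne C ∞ with rfl | hC_top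
    · exact le_top
    have hC_zero : C ≠ 0 := (bot_le.trans_lt hC).ne'
    refine sInf_le fun f hf => ?_
    exact (ENNReal.div_le_iff_le_mul (.inr hC_top) (.inr hC_zero)).1
      ((le_iSup₂ (f := fun f (_ : Measurable f) => Φ f / Ψ f) f hf).trans hC.le)
  · exact iSup₂_le fun f hf => le_sInf fun C hC => ENNReal.div_le_of_le_mul (hC f hf)

theorem leastC_iSup {ι : Sort*} (Φ : ι → (ℝ → ℝ≥0∞) → ℝ≥0∞) (Ψ : (ℝ → ℝ≥0∞) → ℝ≥0∞) :
    leastC (fun f => ⨆ i, Φ i f) Ψ = ⨆ i, leastC (Φ i) Ψ := by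
  simp only [leastC_eq_iSup_div, ENNReal.iSup_div]
  exact (iSup_congr fun f => iSup_comm).trans iSup_comm

theorem leastC_const_mul (a : ℝ≥0∞) (Φ Ψ : (ℝ → ℝ≥0∞) → ℝ≥0∞) :
    leastC (fun f => a * Φ f) Ψ = a * leastC Φ Ψ := by
  simp only [leastC_eq_iSup_div, ENNReal.mul_iSup, mul_div_assoc]

section EssSup

variable {α : Type*} [LinearOrder α] [TopologicalSpace α] [SecondCountableTopology α]
  [MeasurableSpace α] {μ : Measure α}

theorem measure_eq_zero_of_forall_inter_Iic [ClosedIciTopology α] {s : Set α}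
    (h : ∀ x ∈ s, μ (s ∩ Iic x) = 0) : μ s = 0 := by
  refine measure_null_of_locally_null s fun x hx => ?_
  by_cases hmax : ∃ y ∈ s, x < y
  · obtain ⟨y, hy, hxy⟩ := hmax
    exact ⟨s ∩ Iic y, inter_mem_nhdsWithin s (Iic_mem_nhds hxy), h y hy⟩
  · push Not at hmax
    exact ⟨s ∩ Iic x, Filter.mem_of_superset self_mem_nhdsWithin fun y hy => ⟨hy, hmax y hy⟩,
      h x hx⟩

theorem ae_le_essSup_restrict_Iic [OrderClosedTopology α] [OpensMeasurableSpace α]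
    {β : Type*} [CompleteLinearOrder β] [DenselyOrdered β] [TopologicalSpace β] [OrderTopology β]
    [SecondCountableTopology β] (u : α → β) :
    ∀ᵐ x ∂μ, u x ≤ essSup u (μ.restrict (Iic x)) := by
  obtain ⟨D, hD_countable, hD_dense⟩ := TopologicalSpace.exists_countable_dense β
  let gap (c : β) : Set α := {x | essSup u (μ.restrict (Iic x)) ≤ c ∧ c < u x}
  have hgap (c : β) : μ (gap c) = 0 := by
    refine measure_eq_zero_of_forall_inter_Iic fun x hx => ?_
    rw [← Measure.restrict_apply' measurableSet_Iic]
    exact measure_mono_null (fun y hy => not_le.2 (hx.1.trans_lt hy.2))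
      (ae_iff.1 (_root_.ae_le_essSup (f := u)))
  refine measure_mono_null (fun x hx => ?_)
    ((measure_biUnion_null_iff hD_countable).2 fun c _ => hgap c)
  obtain ⟨c, hc, hc_ge, hc_lt⟩ := hD_dense.exists_between (not_le.1 hx)
  exact mem_biUnion hc ⟨hc_ge.le, hc_lt⟩

theorem essSup_mul_eq_iSup_of_antitone [OrderClosedTopology α] [OpensMeasurableSpace α]
    (u : α → ℝ≥0∞) {G : α → ℝ≥0∞} (hG : Antitone G) :
    essSup (fun x => u x * G x) μ = ⨆ t, essSup u (μ.restrict (Iic t)) * G t := by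
  apply le_antisymm
  · refine essSup_le_of_ae_le _ ?_
    filter_upwards [ae_le_essSup_restrict_Iic u] with x hx
    exact le_iSup_of_le x (mul_le_mul_left hx (G x))
  · refine iSup_le fun t => ?_
    calc essSup u (μ.restrict (Iic t)) * G t
        = essSup (fun x => G t * u x) (μ.restrict (Iic t)) := by
          rw [ENNReal.essSup_const_mul, mul_comm]
      _ ≤ essSup (fun x => u x * G x) (μ.restrict (Iic t)) := by
          refine essSup_mono_ae ?_
          filter_upwards [ae_restrict_mem measurableSet_Iic] with x hx
          rw [mul_comm]
          exact mul_le_mul_right (hG hx) (u x)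
      _ ≤ essSup (fun x => u x * G x) μ :=
          essSup_mono_measure Measure.restrict_le_self.absolutelyContinuous

end EssSup

theorem Ubar_eq_essSup (u : ℝ → ℝ≥0∞) (t : ℝ) :
    Ubar u t = essSup u ((volume.restrict (Ioi 0)).restrict (Iic t)) := by
  rw [Ubar, Measure.restrict_restrict measurableSet_Iic, inter_comm, Ioi_inter_Iic,
    Measure.restrict_congr_set Ioc_ae_eq_Icc]

theorem linfN_eq_iSup_of_antitone (u : ℝ → ℝ≥0∞) {G : ℝ → ℝ≥0∞} (hG : Antitone G) :
    linfN u G = ⨆ (t : ℝ) (_ : 0 ≤ t), Ubar u t * G t := by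
  rw [linfN, essSup_mul_eq_iSup_of_antitone u hG]
  refine iSup_congr fun t => ?_
  rw [← Ubar_eq_essSup]
  by_cases ht : 0 ≤ t
  · rw [iSup_pos ht]
  · simp [Ubar, ht]

theorem opSg_antitone (q : ℝ≥0∞) (w : ℝ → ℝ≥0∞) (k : ℝ → ℝ → ℝ≥0∞) (f : ℝ → ℝ≥0∞) :
    Antitone (opSg q w k f) := by
  intro a b hab
  unfold opSg
  split_ifs
  · exact essSup_mono_measure
      (Measure.restrict_mono (Ici_subset_Ici.2 hab) le_rfl).absolutelyContinuous
  · gcongr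

theorem restrict_Ioi_restrict_Ici {α : Type*} [PartialOrder α] [TopologicalSpace α]
    [ClosedIciTopology α] [MeasurableSpace α] [OpensMeasurableSpace α]
    (μ : Measure α) [NullSingletonClass μ] {a t : α} (hat : a ≤ t) :
    (μ.restrict (Ioi a)).restrict (Ici t) = μ.restrict (Ici t) := by
  rw [Measure.restrict_restrict measurableSet_Ici]
  refine Measure.restrict_congr_set ?_
  have h := (Filter.EventuallyEq.refl (ae μ) (Ici t)).inter (Ioi_ae_eq_Ici (μ := μ) (a := a))
  rwa [inter_eq_left.2 (Ici_subset_Ici.2 hat)] at h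

theorem linfN_indicator_Ici (w g : ℝ → ℝ≥0∞) {t : ℝ} (ht : 0 ≤ t) :
    linfN w ((Ici t).indicator g) = essSup (fun y => w y * g y) (volume.restrict (Ici t)) := by
  simp only [linfN, ← indicator_mul_right]
  rw [ENNReal.essSup_indicator_eq_essSup_restrict measurableSet_Ici,
    restrict_Ioi_restrict_Ici volume ht]

theorem lpN_indicator_Ici {p : ℝ} (hp : 0 < p) (w g : ℝ → ℝ≥0∞) {t : ℝ} (ht : 0 ≤ t) :
    lpN p w ((Ici t).indicator g) = (∫⁻ y in Ioi t, w y * g y ^ p) ^ (1 / p) := by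
  have hpow : (fun x => (Ici t).indicator g x ^ p * w x)
      = (Ici t).indicator fun y => w y * g y ^ p := by
    funext x
    by_cases hx : t ≤ x <;> simp [hx, hp, mul_comm]
  rw [lpN, hpow, lintegral_indicator measurableSet_Ici, restrict_Ioi_restrict_Ici volume ht,
    Measure.restrict_congr_set Ioi_ae_eq_Ici]

theorem HsT_eq_indicator (k : ℝ → ℝ → ℝ≥0∞) (t : ℝ) (f : ℝ → ℝ≥0∞) :
    HsT k t f = (Ici t).indicator fun x => intFrom x fun z => k z x * f z := by
  funext x
  simp only [HsT, indicator_apply, mem_Ici]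

theorem lgenN_HsT {q : ℝ≥0∞} (hq : 0 < q) (w : ℝ → ℝ≥0∞) (k : ℝ → ℝ → ℝ≥0∞)
    (f : ℝ → ℝ≥0∞) {t : ℝ} (ht : 0 ≤ t) :
    lgenN q w (HsT k t f) = opSg q w k f t := by
  rw [HsT_eq_indicator, lgenN, opSg]
  split_ifs with hq_top
  · exact linfN_indicator_Ici w _ ht
  · exact lpN_indicator_Ici (ENNReal.toReal_pos hq.ne' hq_top) w _ ht

theorem linfN_opSg {q : ℝ≥0∞} (hq : 0 < q) (u w : ℝ → ℝ≥0∞) (k : ℝ → ℝ → ℝ≥0∞)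
    (f : ℝ → ℝ≥0∞) :
    linfN u (opSg q w k f) = ⨆ (t : ℝ) (_ : 0 ≤ t), Ubar u t * lgenN q w (HsT k t f) := by
  rw [linfN_eq_iSup_of_antitone u (opSg_antitone q w k f)]
  exact iSup_congr fun t => iSup_congr fun ht => by rw [lgenN_HsT hq w k f ht]

theorem statement12_general (q : ℝ≥0∞) (hq : 0 < q) (u w : ℝ → ℝ≥0∞) (k : ℝ → ℝ → ℝ≥0∞)
    (Ψ : (ℝ → ℝ≥0∞) → ℝ≥0∞) :
    leastC (fun f => linfN u (opSg q w k f)) Ψ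
      = ⨆ (t : ℝ) (_ : 0 ≤ t), Ubar u t * leastC (fun f => lgenN q w (HsT k t f)) Ψ := by
  simp only [linfN_opSg hq, leastC_iSup, leastC_const_mul]

theorem statement12 (p : ℝ) (q : ℝ≥0∞) (hp : 1 ≤ p) (hq : 0 < q)
    (u v w : ℝ → ℝ≥0∞) (k : ℝ → ℝ → ℝ≥0∞)
    (hu : Measurable u) (hv : Measurable v) (hw : Measurable w)
    (hk : Measurable (Function.uncurry k))
    (hk0 : ∀ x y : ℝ, x < y → k x y = 0) :
    leastC (fun f => linfN u (opSg q w k f)) (lpN p v)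
      = ⨆ (t : ℝ) (_ : 0 ≤ t),
          Ubar u t * leastC (fun f => lgenN q w (HsT k t f)) (lpN p v) :=
  statement12_general q hq u w k (lpN p v)

end
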